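/- For every integer n ≥ 0, every (a b; c d) ∈ SL₂(ℤ), and every τ ∈ ℍ, the completion Û_{2n}(τ) := 2i ∑_{0≤j≤n} (−1)^{n+j} π^{2n−j+1} U_{2n−2j}(q) / ((2v)^j j! (2n−2j+1)!) satisfies Û_{2n}((aτ+b)/(cτ+d)) = (cτ+d)^{2n} Û_{2n}(τ); moreover Û_{2n} is a polynomial in 1/v of degree exactly n with holomorphic coefficients, so it is an almost holomorphic modular form of weight 2n and depth n. -/

import Mathlib

/-!
The completion `Û_{2n}` is, up to normalisation, a Taylor coefficient of a completed theta
function. Expanding the sines in Jacobi's odd theta function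
`ϑ(z; τ) = 2i q^{1/8} ∑_{j≥0} (−1)^j q^{j(j+1)/2} sin((2j+1)πz)`, one finds the numerator of
`U_{2k}(q)`, times `q^{1/8}` and a constant, as the coefficient of `z^{2k+1}`. By Poisson summation
`ϑ(z/τ; −1/τ) = −i √(−iτ) e^{πiz²/τ} ϑ(z; τ)`, and on multiplying `ϑ(z; τ)` by `e^{πz²/(2v)}` the
factor `e^{πiz²/τ}` disappears. Hence under `τ ↦ −1/τ` the coefficient `c_n(τ)` of `z^{2n+1}` in
`e^{πz²/(2v)} ϑ(z; τ)` is multiplied by `−i √(−iτ) τ^{2n+1}`, so that `Û_{2n} = 2πi c_n / c_0`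
acquires the factor `τ^{2n}`; it is invariant under `τ ↦ τ + 1`, and these two maps generate
`SL₂(ℤ)`.

The coefficients of the polynomial in `1/v` are constant multiples of the series `U_{2k}(q)`, the
top one of `U_0 = 1`. They are holomorphic because `c_0` has no zeros: by the same transformation
law `c_0⁸` is a nonzero cusp form of weight `12` and level one, hence a multiple of `Δ`.
-/

open Complex Filter
open scoped Real

noncomputable section

/-- `q = e^{2πiτ}`. -/
def qq (τ : ℂ) : ℂ := Complex.exp (2 * (π : ℂ) * Complex.I * τ)

/-- Ramanujan's series `U_{2n}(q)`:
numerator `∑_{j≥0} (−1)^j (2j+1)^{2n+1} q^{j(j+1)/2}` divided by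
denominator `∑_{j≥0} (−1)^j (2j+1) q^{j(j+1)/2}`. -/
def Uram (n : ℕ) (q : ℂ) : ℂ :=
  (∑' j : ℕ, (-1 : ℂ) ^ j * ((2 * j + 1 : ℕ) : ℂ) ^ (2 * n + 1) * q ^ (j * (j + 1) / 2)) /
    (∑' j : ℕ, (-1 : ℂ) ^ j * ((2 * j + 1 : ℕ) : ℂ) * q ^ (j * (j + 1) / 2))

/-- The completion
`Û_{2n}(τ) = 2i ∑_{0≤j≤n} (−1)^{n+j} π^{2n−j+1} U_{2n−2j}(q) / ((2v)^j j! (2n−2j+1)!)`. -/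
def Uhat (n : ℕ) (τ : ℂ) : ℂ :=
  2 * Complex.I * ∑ j ∈ Finset.range (n + 1),
    (-1 : ℂ) ^ (n + j) * (π : ℂ) ^ (2 * n - j + 1) * Uram (n - j) (qq τ) /
      ((2 * (τ.im : ℂ)) ^ j * (Nat.factorial j : ℂ) * (Nat.factorial (2 * n - 2 * j + 1) : ℂ))

open UpperHalfPlane hiding I
open scoped Topology MatrixGroups ModularForm

/-! ### Power series and sine series -/

lemma eq_of_hasSum_pow_smul {𝕜 E : Type*} [NontriviallyNormedField 𝕜] [NormedAddCommGroup E]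
    [NormedSpace 𝕜 E] {e : ℕ → ℕ} (he : Function.Injective e) {a b : ℕ → E} {f : 𝕜 → E}
    (ha : ∀ᶠ z in 𝓝 0, HasSum (fun n ↦ z ^ e n • a n) (f z))
    (hb : ∀ᶠ z in 𝓝 0, HasSum (fun n ↦ z ^ e n • b n) (f z)) : a = b := by
  let series (c : ℕ → E) : FormalMultilinearSeries 𝕜 𝕜 E :=
    fun n ↦ ContinuousMultilinearMap.mkPiRing 𝕜 (Fin n) (Function.extend e c 0 n)
  have coeff_series (c : ℕ → E) (n : ℕ) : (series c).coeff n = Function.extend e c 0 n := by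
    simp [series, FormalMultilinearSeries.coeff]
  have hasFPowerSeriesAt_series {c : ℕ → E}
      (hc : ∀ᶠ z in 𝓝 0, HasSum (fun n ↦ z ^ e n • c n) (f z)) :
      HasFPowerSeriesAt f (series c) 0 := by
    rw [hasFPowerSeriesAt_iff]
    filter_upwards [hc] with z hz
    rw [zero_add, ← he.hasSum_iff fun n hn ↦ by simp_all [Function.extend_apply']]
    simpa only [Function.comp_def, coeff_series, he.extend_apply] using hz
  have hseries := (hasFPowerSeriesAt_series ha).eq_formalMultilinearSeries
    (hasFPowerSeriesAt_series hb)
  funext n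
  simpa only [coeff_series, he.extend_apply] using congrArg (fun p ↦ p.coeff (e n)) hseries

lemma differentiableOn_tsum_mul_pow {ι : Type*} {c : ι → ℂ} {e : ι → ℕ}
    (hc : ∀ r : ℝ, 0 ≤ r → r < 1 → Summable fun j ↦ ‖c j‖ * r ^ e j) :
    DifferentiableOn ℂ (fun q ↦ ∑' j, c j * q ^ e j) (Metric.ball 0 1) := by
  intro q hq
  obtain ⟨r, hqr, hr1⟩ := exists_between (mem_ball_zero_iff.mp hq)
  have hr0 : 0 ≤ r := (norm_nonneg q).trans hqr.le
  have hdiff : DifferentiableOn ℂ (fun q ↦ ∑' j, c j * q ^ e j) (Metric.ball 0 r) := by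
    refine differentiableOn_tsum_of_summable_norm (hc r hr0 hr1) (fun j ↦ by fun_prop)
      Metric.isOpen_ball fun j w hw ↦ ?_
    rw [norm_mul, norm_pow]
    gcongr
    exact (mem_ball_zero_iff.mp hw).le
  exact (hdiff.differentiableAt
    (Metric.isOpen_ball.mem_nhds (mem_ball_zero_iff.mpr hqr))).differentiableWithinAt

lemma summable_mul_sin_series {ι : Type*} {a c : ι → ℂ} {z : ℂ}
    (h : Summable fun j ↦ ‖a j‖ * Real.sinh ‖c j * z‖) :
    Summable fun p : ι × ℕ ↦
      a p.1 * ((-1) ^ p.2 * (c p.1 * z) ^ (2 * p.2 + 1) / (2 * p.2 + 1).factorial) := by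
  have hrow (j : ι) := (Real.hasSum_sinh ‖c j * z‖).mul_left ‖a j‖
  refine .of_norm_bounded (g := fun p ↦
    ‖a p.1‖ * (‖c p.1 * z‖ ^ (2 * p.2 + 1) / (2 * p.2 + 1).factorial)) ?_ fun p ↦ by simp
  rw [summable_prod_of_nonneg fun p ↦ by positivity]
  exact ⟨fun j ↦ (hrow j).summable, by simpa only [(hrow _).tsum_eq] using h⟩

lemma hasSum_pow_mul_tsum_mul_sin {ι : Type*} {a c : ι → ℂ} {z : ℂ}
    (h : Summable fun j ↦ ‖a j‖ * Real.sinh ‖c j * z‖) :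
    HasSum (fun k : ℕ ↦ z ^ (2 * k + 1) *
        ((-1) ^ k / (2 * k + 1).factorial * ∑' j, a j * c j ^ (2 * k + 1)))
      (∑' j, a j * sin (c j * z)) := by
  have hsum := summable_mul_sin_series h
  have hrow (j : ι) := (hasSum_sin (c j * z)).mul_left (a j)
  have hcol (k : ℕ) : ∑' j, a j * ((-1) ^ k * (c j * z) ^ (2 * k + 1) / (2 * k + 1).factorial) =
      z ^ (2 * k + 1) * ((-1) ^ k / (2 * k + 1).factorial * ∑' j, a j * c j ^ (2 * k + 1)) := by
    rw [← tsum_mul_left, ← tsum_mul_left]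
    exact tsum_congr fun j ↦ by ring
  rw [(hsum.hasSum.prod_fiberwise hrow).tsum_eq]
  have hswap := (Equiv.prodComm ℕ ι).hasSum_iff.mpr hsum.hasSum
  refine hswap.prod_fiberwise fun k ↦ ?_
  rw [← hcol k]
  exact (hswap.summable.prod_factor k).hasSum

/-! ### Modular forms of level one -/

section

variable {f : ℂ → ℂ} {k : ℤ}

lemma slash_eq_self_of_S_T (hS : ∀ τ : ℂ, 0 < τ.im → f (-1 / τ) = τ ^ k * f τ)
    (hT : ∀ τ : ℂ, 0 < τ.im → f (τ + 1) = f τ) (γ : SL(2, ℤ)) :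
    (fun τ : ℍ ↦ f τ) ∣[k] γ = fun τ : ℍ ↦ f τ := by
  refine SlashInvariantForm.slash_action_generators_SL2Z ?_ ?_ γ
  · ext τ
    rw [SlashInvariantForm.slash_S_apply, zpow_neg, mul_inv_eq_iff_eq_mul₀
      (zpow_ne_zero k τ.ne_zero), mul_comm, ← hS τ τ.im_pos, coe_mk, inv_neg, neg_div, one_div]
  · ext τ
    have hdenom : denom ModularGroup.T τ = 1 := by
      rw [ModularGroup.denom_apply]
      simp [ModularGroup.T]
    rw [ModularForm.SL_slash_apply, hdenom, modular_T_smul, coe_vadd, ofReal_one, add_comm,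
      hT τ τ.im_pos, one_zpow, mul_one]

lemma apply_moebius_of_S_T (hS : ∀ τ : ℂ, 0 < τ.im → f (-1 / τ) = τ ^ k * f τ)
    (hT : ∀ τ : ℂ, 0 < τ.im → f (τ + 1) = f τ) {a b c d : ℤ} (h : a * d - b * c = 1)
    {τ : ℂ} (hτ : 0 < τ.im) :
    f ((a * τ + b) / (c * τ + d)) = (c * τ + d) ^ k * f τ := by
  let γ : SL(2, ℤ) := ⟨!![a, b; c, d], by rw [Matrix.det_fin_two_of, h]⟩
  let z : ℍ := ⟨τ, hτ⟩
  have hdenom : denom γ z = c * τ + d := by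
    rw [ModularGroup.denom_apply]
    simp [γ, z]
  have hsmul : ((γ • z : ℍ) : ℂ) = (a * τ + b) / (c * τ + d) := by
    rw [coe_specialLinearGroup_apply]
    simp [γ, z]
  have hslash := congrFun (slash_eq_self_of_S_T hS hT γ) z
  rwa [ModularForm.SL_slash_apply, zpow_neg,
    mul_inv_eq_iff_eq_mul₀ (zpow_ne_zero k (denom_ne_zero γ z)), hdenom, hsmul,
    mul_comm (f z)] at hslash

/-- The cusp form of level one and weight `k` given by a function on the upper half-plane that
transforms correctly under `τ ↦ -1/τ` and `τ ↦ τ + 1`; the values of `f` elsewhere are ignored. -/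
def cuspFormOfST (hS : ∀ τ : ℂ, 0 < τ.im → f (-1 / τ) = τ ^ k * f τ)
    (hT : ∀ τ : ℂ, 0 < τ.im → f (τ + 1) = f τ)
    (hf : DifferentiableOn ℂ f {τ | 0 < τ.im})
    (h0 : Tendsto (fun τ : ℍ ↦ f τ) atImInfty (𝓝 0)) : CuspForm 𝒮ℒ k where
  toFun τ := f τ
  slash_action_eq' := by
    rintro _ ⟨γ, rfl⟩
    exact slash_eq_self_of_S_T hS hT γ
  holo' := by
    rw [mdifferentiable_iff]
    exact hf.congr fun τ hτ ↦ by simp [ofComplex_apply_of_im_pos hτ]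
  zero_at_cusps' hc := by
    rw [Subgroup.IsArithmetic.isCusp_iff_isCusp_SL2Z] at hc
    rw [OnePoint.isZeroAt_iff_forall_SL2Z hc]
    intro γ _
    rw [slash_eq_self_of_S_T hS hT]
    exact h0

end

lemma cuspForm_twelve_apply_ne_zero {F : CuspForm 𝒮ℒ 12} (hF : F ≠ 0) (τ : ℍ) : F τ ≠ 0 := by
  obtain ⟨c, rfl⟩ := CuspForm.exists_smul_discriminant_of_weight_eq_twelve F
  exact smul_ne_zero (left_ne_zero_of_smul hF) (ModularForm.discriminant_ne_zero τ)

/-! ### Ramanujan's `q`-series -/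

lemma le_mul_add_one_div_two (j : ℕ) : j ≤ j * (j + 1) / 2 := by
  rw [Nat.le_div_iff_mul_le two_pos]
  obtain rfl | hj := j.eq_zero_or_pos
  · exact le_rfl
  · exact Nat.mul_le_mul_left j (by lia)

lemma summable_odd_pow_mul_pow_triangle (m : ℕ) {r : ℝ} (h0 : 0 ≤ r) (h1 : r < 1) :
    Summable fun j : ℕ ↦ ((2 * j + 1 : ℕ) : ℝ) ^ m * r ^ (j * (j + 1) / 2) := by
  have hO : (fun j : ℕ ↦ (((2 * j + 1) ^ m : ℕ) : ℝ)) =O[atTop] fun j ↦ ((j ^ m : ℕ) : ℝ) := by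
    have hlinear : (fun j : ℕ ↦ ((2 * j + 1 : ℕ) : ℝ)) =O[atTop] fun j ↦ (j : ℝ) := by
      refine .of_bound 3 ?_
      filter_upwards [eventually_ge_atTop 1] with j hj
      rw [RCLike.norm_natCast, RCLike.norm_natCast]
      exact_mod_cast (by lia : 2 * j + 1 ≤ 3 * j)
    simpa only [Nat.cast_pow] using hlinear.pow m
  have hgeom := summable_norm_mul_geometric_of_norm_lt_one
    (by rwa [Real.norm_of_nonneg h0] : ‖r‖ < 1) hO
  refine .of_nonneg_of_le (fun j ↦ by positivity) (fun j ↦ ?_) hgeom.of_norm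
  rw [Nat.cast_pow]
  gcongr ?_ * ?_
  exact pow_le_pow_of_le_one h0 h1.le (le_mul_add_one_div_two j)

/-- The numerator of `U_{2k}(q)`. For `k = 0` it is the common denominator of all `U_{2k}(q)`. -/
def ramanujanNumerator (k : ℕ) (q : ℂ) : ℂ :=
  ∑' j : ℕ, (-1) ^ j * ((2 * j + 1 : ℕ) : ℂ) ^ (2 * k + 1) * q ^ (j * (j + 1) / 2)

lemma Uram_eq_div (k : ℕ) (q : ℂ) :
    Uram k q = ramanujanNumerator k q / ramanujanNumerator 0 q := by
  simp only [Uram, ramanujanNumerator, mul_zero, zero_add, pow_one]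

lemma ramanujanNumerator_apply_zero (k : ℕ) : ramanujanNumerator k 0 = 1 := by
  rw [ramanujanNumerator, tsum_eq_single 0 fun j hj ↦ ?_]
  · simp
  · rw [zero_pow (by have := le_mul_add_one_div_two j; lia), mul_zero]

lemma differentiableOn_ramanujanNumerator (k : ℕ) :
    DifferentiableOn ℂ (ramanujanNumerator k) (Metric.ball 0 1) :=
  differentiableOn_tsum_mul_pow fun r h0 h1 ↦ by
    simpa only [norm_mul, norm_pow, norm_neg, norm_one, one_pow, one_mul, Complex.norm_natCast]
      using summable_odd_pow_mul_pow_triangle (2 * k + 1) h0 h1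

lemma norm_qq_lt_one {τ : ℂ} (hτ : 0 < τ.im) : ‖qq τ‖ < 1 := by
  rw [qq, Complex.norm_exp, Real.exp_lt_one_iff]
  have hre : (2 * (π : ℂ) * I * τ).re = -(2 * π * τ.im) := by simp
  rw [hre, neg_neg_iff_pos]
  positivity

lemma qq_add_one (τ : ℂ) : qq (τ + 1) = qq τ := by
  rw [qq, qq, mul_add, mul_one, Complex.exp_add, Complex.exp_two_pi_mul_I, mul_one]

lemma differentiable_qq : Differentiable ℂ qq := by
  unfold qq
  fun_prop

lemma differentiableOn_ramanujanNumerator_qq (k : ℕ) :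
    DifferentiableOn ℂ (fun τ ↦ ramanujanNumerator k (qq τ)) {τ | 0 < τ.im} :=
  (differentiableOn_ramanujanNumerator k).comp differentiable_qq.differentiableOn
    fun _ hτ ↦ mem_ball_zero_iff.mpr (norm_qq_lt_one hτ)

lemma qq_pow_triangle (j : ℕ) (τ : ℂ) :
    qq τ ^ (j * (j + 1) / 2) = cexp (π * I * (j ^ 2 + j) * τ) := by
  have htriangle : ((j * (j + 1) / 2 : ℕ) : ℂ) = j * (j + 1) / 2 := by
    rw [Nat.cast_div (Nat.even_mul_succ_self j).two_dvd two_ne_zero]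
    push_cast
    rfl
  rw [qq, ← Complex.exp_nat_mul, htriangle]
  ring_nf

/-! ### Jacobi's odd theta function -/

/-- Jacobi's odd theta function `∑ₙ (-1)ⁿ q^((n + 1/2)²/2) e^((2n + 1)πiz)`, the sum being over all
integers `n`; some authors multiply it by `-i`. -/
def oddTheta (z τ : ℂ) : ℂ :=
  cexp (π * I * (z + τ / 4)) * jacobiTheta₂ (z + τ / 2 + 1 / 2) τ

lemma exp_mul_jacobiTheta₂_term_eq (n : ℤ) (z τ : ℂ) :
    cexp (π * I * (z + τ / 4)) * jacobiTheta₂_term n (z + τ / 2 + 1 / 2) τ =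
      cexp (π * I * τ / 4) *
        ((-1) ^ n * cexp (π * I * (n ^ 2 + n) * τ)) * cexp ((2 * n + 1) * π * z * I) := by
  rw [jacobiTheta₂_term, ← exp_pi_mul_I, ← Complex.exp_int_mul]
  simp only [← Complex.exp_add]
  ring_nf

lemma hasSum_oddTheta (z : ℂ) {τ : ℂ} (hτ : 0 < τ.im) :
    HasSum (fun j : ℕ ↦ 2 * I * cexp (π * I * τ / 4) * ((-1) ^ j * qq τ ^ (j * (j + 1) / 2)) *
      sin ((2 * j + 1 : ℕ) * π * z)) (oddTheta z τ) := by
  have hsum := ((hasSum_jacobiTheta₂_term (z + τ / 2 + 1 / 2) hτ).mul_left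
    (cexp (π * I * (z + τ / 4)))).nat_add_neg_add_one
  refine hsum.congr_fun fun j ↦ ?_
  have hsign : (-1 : ℂ) ^ (-(j + 1 : ℤ)) = -(-1) ^ j := by
    rw [zpow_neg, ← inv_zpow, inv_neg_one, zpow_add_one₀ (neg_ne_zero.mpr one_ne_zero),
      zpow_natCast, mul_neg_one]
  have hquadratic : ((-(j + 1 : ℤ) : ℤ) : ℂ) ^ 2 + (-(j + 1 : ℤ) : ℤ) = j ^ 2 + j := by
    push_cast
    ring
  have hlinear : (2 * ((-(j + 1 : ℤ) : ℤ) : ℂ) + 1) * π * z * I =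
      -((2 * j + 1 : ℕ) * π * z) * I := by
    push_cast
    ring
  rw [exp_mul_jacobiTheta₂_term_eq, exp_mul_jacobiTheta₂_term_eq, hsign, hquadratic, hlinear,
    qq_pow_triangle, zpow_natCast, Complex.sin]
  push_cast
  linear_combination cexp (π * I * τ / 4) * (-1) ^ j * cexp (π * I * (j ^ 2 + j) * τ) *
    (cexp (-((2 * j + 1) * π * z) * I) - cexp ((2 * j + 1) * π * z * I)) * I_sq

/-- At the point `i|z|` the sines of `hasSum_oddTheta` become hyperbolic sines. -/
lemma summable_oddTheta_norm_mul_sinh (z : ℂ) {τ : ℂ} (hτ : 0 < τ.im) :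
    Summable fun j : ℕ ↦
      ‖2 * I * cexp (π * I * τ / 4) * ((-1) ^ j * qq τ ^ (j * (j + 1) / 2))‖ *
        Real.sinh ‖((2 * j + 1 : ℕ) * π : ℂ) * z‖ := by
  refine (hasSum_oddTheta (‖z‖ * I) hτ).summable.norm.congr fun j ↦ ?_
  have hnorm : ((2 * j + 1 : ℕ) : ℂ) * π * (‖z‖ * I) = ‖((2 * j + 1 : ℕ) * π : ℂ) * z‖ * I := by
    rw [norm_mul, norm_mul, Complex.norm_natCast, Complex.norm_of_nonneg Real.pi_pos.le]
    push_cast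
    ring
  rw [norm_mul _ (sin _), hnorm, sin_mul_I, norm_mul (sinh _), norm_I, mul_one, ← ofReal_sinh,
    Complex.norm_of_nonneg (Real.sinh_nonneg_iff.mpr (norm_nonneg _))]

/-- The coefficient of `z ^ (2 * k + 1)` in the Taylor expansion of `oddTheta z τ` at `z = 0`. -/
def oddThetaCoeff (k : ℕ) (τ : ℂ) : ℂ :=
  2 * I * cexp (π * I * τ / 4) *
    ((-1) ^ k * π ^ (2 * k + 1) / (2 * k + 1).factorial * ramanujanNumerator k (qq τ))

lemma hasSum_oddThetaCoeff (z : ℂ) {τ : ℂ} (hτ : 0 < τ.im) :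
    HasSum (fun k : ℕ ↦ z ^ (2 * k + 1) * oddThetaCoeff k τ) (oddTheta z τ) := by
  rw [← (hasSum_oddTheta z hτ).tsum_eq]
  refine (hasSum_pow_mul_tsum_mul_sin (summable_oddTheta_norm_mul_sinh z hτ)).congr_fun fun k ↦ ?_
  simp only [oddThetaCoeff, ramanujanNumerator, ← tsum_mul_left]
  exact tsum_congr fun j ↦ by ring

lemma oddTheta_neg_one_div (z : ℂ) {τ : ℂ} (hτ : τ ≠ 0) :
    oddTheta (z / τ) (-1 / τ) =
      -I * (-I * τ) ^ (1 / 2 : ℂ) * cexp (π * I * z ^ 2 / τ) * oddTheta z τ := by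
  have hroot : (-I * τ) ^ (1 / 2 : ℂ) ≠ 0 := by simp [Complex.cpow_eq_zero_iff, hτ]
  have hshift : z / τ + -1 / τ / 2 + 1 / 2 = (z + τ / 2 + 1 / 2) / τ + -1 / τ := by
    field
  have hexp : cexp (π * I * (z / τ + -1 / τ / 4)) *
        cexp (-π * I * (-1 / τ + 2 * ((z + τ / 2 + 1 / 2) / τ))) =
      cexp (-π / 2 * I) * cexp (π * I * z ^ 2 / τ) * cexp (π * I * (z + τ / 4)) *
        cexp (-π * I * (z + τ / 2 + 1 / 2) ^ 2 / τ) := by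
    simp only [← Complex.exp_add]
    congr 1
    field_simp
    ring
  rw [exp_neg_pi_div_two_mul_I] at hexp
  rw [oddTheta, oddTheta, jacobiTheta₂_functional_equation (z + τ / 2 + 1 / 2) τ, hshift,
    jacobiTheta₂_add_left', ← mul_assoc, hexp]
  field

/-! ### The completed theta function -/

lemma ne_zero_of_im_pos {τ : ℂ} (hτ : 0 < τ.im) : τ ≠ 0 := by
  rintro rfl
  exact hτ.ne' zero_im

lemma im_neg_one_div (τ : ℂ) : (-1 / τ).im = τ.im / normSq τ := by
  rw [neg_div, neg_im, one_div, inv_im, neg_div, neg_neg]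

lemma im_neg_one_div_pos {τ : ℂ} (hτ : 0 < τ.im) : 0 < (-1 / τ).im := by
  rw [im_neg_one_div]
  exact div_pos hτ (normSq_pos.mpr (ne_zero_of_im_pos hτ))

/-- The completion of the odd theta function: the Gaussian factor, which is not holomorphic in `τ`,
removes `e^(πiz²/τ)` from the transformation law under `(z, τ) ↦ (z/τ, -1/τ)`. -/
def completedTheta (z τ : ℂ) : ℂ :=
  cexp (π / (2 * τ.im) * z ^ 2) * oddTheta z τ

/-- Equivalently, `|τ|² = τ (τ - 2iv)`. -/
lemma pi_div_two_mul_im_neg_one_div {τ : ℂ} (hτ : 0 < τ.im) :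
    π / (2 * ((-1 / τ).im : ℂ)) = π / (2 * τ.im) * τ ^ 2 - π * I * τ := by
  have hv : (τ.im : ℂ) ≠ 0 := by exact_mod_cast hτ.ne'
  have hnormSq : (normSq τ : ℂ) = τ * (τ - 2 * τ.im * I) := by
    have hconj := sub_conj τ
    push_cast at hconj
    rw [← mul_conj]
    linear_combination -τ * hconj
  rw [im_neg_one_div, ofReal_div, hnormSq]
  field

lemma completedTheta_neg_one_div (z : ℂ) {τ : ℂ} (hτ : 0 < τ.im) :
    completedTheta (z / τ) (-1 / τ) = -I * (-I * τ) ^ (1 / 2 : ℂ) * completedTheta z τ := by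
  have hτ0 := ne_zero_of_im_pos hτ
  have hexp : cexp (π / (2 * ((-1 / τ).im : ℂ)) * (z / τ) ^ 2) * cexp (π * I * z ^ 2 / τ) =
      cexp (π / (2 * τ.im) * z ^ 2) := by
    rw [← Complex.exp_add, pi_div_two_mul_im_neg_one_div hτ]
    congr 1
    field
  rw [completedTheta, completedTheta, oddTheta_neg_one_div z hτ0, ← hexp]
  ring

/-- The coefficient of `z ^ (2 * n + 1)` in the Taylor expansion of `completedTheta z τ` at
`z = 0`. -/
def completedThetaCoeff (n : ℕ) (τ : ℂ) : ℂ :=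
  ∑ j ∈ Finset.range (n + 1), (π / (2 * τ.im)) ^ j / j.factorial * oddThetaCoeff (n - j) τ

lemma hasSum_completedThetaCoeff (z : ℂ) {τ : ℂ} (hτ : 0 < τ.im) :
    HasSum (fun n : ℕ ↦ z ^ (2 * n + 1) * completedThetaCoeff n τ) (completedTheta z τ) := by
  have hexp := NormedSpace.expSeries_div_hasSum_exp (π / (2 * τ.im) * z ^ 2 : ℂ)
  rw [← Complex.exp_eq_exp_ℂ] at hexp
  have htheta := hasSum_oddThetaCoeff z hτ
  rw [completedTheta, ← hexp.tsum_eq, ← htheta.tsum_eq]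
  refine (hasSum_sum_range_mul_of_summable_norm hexp.summable.norm
    htheta.summable.norm).congr_fun fun n ↦ ?_
  rw [completedThetaCoeff, Finset.mul_sum]
  refine Finset.sum_congr rfl fun j hj ↦ ?_
  obtain ⟨m, rfl⟩ := Nat.exists_eq_add_of_le (Finset.mem_range_succ_iff.mp hj)
  rw [Nat.add_sub_cancel_left]
  ring

lemma completedThetaCoeff_neg_one_div (n : ℕ) {τ : ℂ} (hτ : 0 < τ.im) :
    completedThetaCoeff n (-1 / τ) =
      -I * (-I * τ) ^ (1 / 2 : ℂ) * τ ^ (2 * n + 1) * completedThetaCoeff n τ := by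
  have hτ0 := ne_zero_of_im_pos hτ
  have hcoeff : (fun n ↦ (τ ^ (2 * n + 1))⁻¹ * completedThetaCoeff n (-1 / τ)) =
      fun n ↦ -I * (-I * τ) ^ (1 / 2 : ℂ) * completedThetaCoeff n τ := by
    refine eq_of_hasSum_pow_smul (𝕜 := ℂ) (e := fun n ↦ 2 * n + 1)
      (f := fun z ↦ completedTheta (z / τ) (-1 / τ)) (fun m n h ↦ by lia)
      (.of_forall fun z ↦ ?_) (.of_forall fun z ↦ ?_)
    · simpa only [smul_eq_mul, div_pow, div_eq_mul_inv _ (τ ^ _), mul_assoc] using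
        hasSum_completedThetaCoeff (z / τ) (im_neg_one_div_pos hτ)
    · rw [completedTheta_neg_one_div z hτ]
      simpa only [smul_eq_mul, mul_left_comm] using
        (hasSum_completedThetaCoeff z hτ).mul_left (-I * (-I * τ) ^ (1 / 2 : ℂ))
  rw [mul_right_comm, ← congrFun hcoeff n]
  field

/-! ### Non-vanishing of the denominator and modularity of the completion -/

lemma completedThetaCoeff_zero (τ : ℂ) : completedThetaCoeff 0 τ = oddThetaCoeff 0 τ := by
  simp [completedThetaCoeff]

lemma oddThetaCoeff_zero_pow_eight (τ : ℂ) :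
    oddThetaCoeff 0 τ ^ 8 = (2 * π * I) ^ 8 * (qq τ * ramanujanNumerator 0 (qq τ) ^ 8) := by
  have hqq : cexp (π * I * τ / 4) ^ 8 = qq τ := by
    rw [qq, ← Complex.exp_nat_mul]
    ring_nf
  simp only [oddThetaCoeff, mul_pow, hqq, pow_zero, mul_zero, zero_add, pow_one,
    Nat.factorial_one, Nat.cast_one, div_one, one_mul]
  ring

lemma oddThetaCoeff_zero_pow_eight_neg_one_div {τ : ℂ} (hτ : 0 < τ.im) :
    oddThetaCoeff 0 (-1 / τ) ^ 8 = τ ^ (12 : ℤ) * oddThetaCoeff 0 τ ^ 8 := by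
  have hroot : ((-I * τ) ^ (1 / 2 : ℂ)) ^ 8 = τ ^ 4 := by
    rw [← Complex.cpow_nat_mul, show ((8 : ℕ) : ℂ) * (1 / 2) = (4 : ℕ) by norm_num,
      Complex.cpow_natCast, mul_pow, neg_pow, I_pow_four]
    norm_num
  have hI : (-I) ^ 8 = 1 := by
    linear_combination (I ^ 4 + 1) * I_pow_four
  rw [← completedThetaCoeff_zero, completedThetaCoeff_neg_one_div 0 hτ, completedThetaCoeff_zero,
    mul_pow, mul_pow, mul_pow, hroot, hI, zpow_ofNat]
  ring

lemma tendsto_qq_atImInfty : Tendsto (fun τ : ℍ ↦ qq τ) atImInfty (𝓝 0) := by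
  simpa only [qq, Function.Periodic.qParam, ofReal_one, div_one] using
    UpperHalfPlane.qParam_tendsto_atImInfty one_pos

lemma tendsto_ramanujanNumerator_atImInfty (k : ℕ) :
    Tendsto (fun τ : ℍ ↦ ramanujanNumerator k (qq τ)) atImInfty (𝓝 1) := by
  have hcont := ((differentiableOn_ramanujanNumerator k).differentiableAt
    (Metric.ball_mem_nhds 0 one_pos)).continuousAt.tendsto
  rw [ramanujanNumerator_apply_zero] at hcont
  exact hcont.comp tendsto_qq_atImInfty

/-- The eighth power of the derivative of the odd theta function at `z = 0`; the exponent `8` is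
chosen to remove its multiplier of order `8`. -/
def thetaCuspForm : CuspForm 𝒮ℒ 12 :=
  cuspFormOfST (f := fun τ ↦ oddThetaCoeff 0 τ ^ 8)
    (fun _ ↦ oddThetaCoeff_zero_pow_eight_neg_one_div)
    (fun τ _ ↦ by simp only [oddThetaCoeff_zero_pow_eight, qq_add_one])
    (by
      simp only [oddThetaCoeff_zero_pow_eight]
      exact (differentiable_qq.differentiableOn.mul
        ((differentiableOn_ramanujanNumerator_qq 0).pow 8)).const_mul _)
    (by
      simpa only [oddThetaCoeff_zero_pow_eight, zero_mul, mul_zero] using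
        (tendsto_qq_atImInfty.mul
          ((tendsto_ramanujanNumerator_atImInfty 0).pow 8)).const_mul ((2 * π * I : ℂ) ^ 8))

lemma thetaCuspForm_apply (τ : ℍ) :
    thetaCuspForm τ = (2 * π * I) ^ 8 * (qq τ * ramanujanNumerator 0 (qq τ) ^ 8) :=
  oddThetaCoeff_zero_pow_eight τ

lemma thetaCuspForm_ne_zero : thetaCuspForm ≠ 0 := by
  obtain ⟨τ, hτ⟩ :=
    ((tendsto_ramanujanNumerator_atImInfty 0).eventually_ne one_ne_zero).exists
  refine DFunLike.ne_iff.mpr ⟨τ, ?_⟩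
  rw [thetaCuspForm_apply]
  exact mul_ne_zero (pow_ne_zero 8 two_pi_I_ne_zero)
    (mul_ne_zero (Complex.exp_ne_zero _) (pow_ne_zero 8 hτ))

lemma ramanujanNumerator_zero_ne_zero {τ : ℂ} (hτ : 0 < τ.im) :
    ramanujanNumerator 0 (qq τ) ≠ 0 := by
  have hne := cuspForm_twelve_apply_ne_zero thetaCuspForm_ne_zero ⟨τ, hτ⟩
  rw [thetaCuspForm_apply] at hne
  exact (pow_ne_zero_iff (by norm_num)).mp (right_ne_zero_of_mul (right_ne_zero_of_mul hne))

lemma differentiableOn_Uram_qq (k : ℕ) :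
    DifferentiableOn ℂ (fun τ ↦ Uram k (qq τ)) {τ | 0 < τ.im} := by
  simp only [Uram_eq_div]
  exact (differentiableOn_ramanujanNumerator_qq k).div (differentiableOn_ramanujanNumerator_qq 0)
    fun _ ↦ ramanujanNumerator_zero_ne_zero

lemma Uram_zero_qq {τ : ℂ} (hτ : 0 < τ.im) : Uram 0 (qq τ) = 1 := by
  rw [Uram_eq_div, div_self (ramanujanNumerator_zero_ne_zero hτ)]

lemma Uhat_eq_completedThetaCoeff_div (n : ℕ) {τ : ℂ} (hτ : 0 < τ.im) :
    Uhat n τ = 2 * π * I * (completedThetaCoeff n τ / completedThetaCoeff 0 τ) := by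
  have hD := ramanujanNumerator_zero_ne_zero hτ
  rw [Uhat, completedThetaCoeff_zero, completedThetaCoeff, Finset.sum_div, Finset.mul_sum,
    Finset.mul_sum]
  refine Finset.sum_congr rfl fun j hj ↦ ?_
  obtain ⟨m, rfl⟩ := Nat.exists_eq_add_of_le (Finset.mem_range_succ_iff.mp hj)
  have hsign : (-1 : ℂ) ^ (j + m + j) = (-1) ^ m := by
    rw [add_right_comm, pow_add, (Even.add_self j).neg_one_pow, one_mul]
  rw [hsign, Nat.add_sub_cancel_left, (by lia : 2 * (j + m) - j + 1 = j + (2 * m + 1)),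
    (by lia : 2 * (j + m) - 2 * j + 1 = 2 * m + 1), Uram_eq_div, oddThetaCoeff, oddThetaCoeff]
  simp only [pow_zero, mul_zero, zero_add, Nat.factorial_one, Nat.cast_one, pow_one, mul_pow,
    div_pow]
  have hexp := Complex.exp_ne_zero (π * I * τ / 4)
  field

lemma Uhat_neg_one_div (n : ℕ) {τ : ℂ} (hτ : 0 < τ.im) :
    Uhat n (-1 / τ) = τ ^ (2 * n) * Uhat n τ := by
  have hτ0 := ne_zero_of_im_pos hτ
  have hfactor : -I * (-I * τ) ^ (1 / 2 : ℂ) * τ ≠ 0 := by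
    simp [Complex.cpow_eq_zero_iff, hτ0]
  rw [Uhat_eq_completedThetaCoeff_div n hτ,
    Uhat_eq_completedThetaCoeff_div n (im_neg_one_div_pos hτ), completedThetaCoeff_neg_one_div n hτ,
    completedThetaCoeff_neg_one_div 0 hτ, mul_zero, zero_add, pow_one, pow_succ', ← mul_assoc,
    mul_assoc (_ * τ), mul_div_mul_left _ _ hfactor]
  ring

lemma Uhat_add_one (n : ℕ) (τ : ℂ) : Uhat n (τ + 1) = Uhat n τ := by
  simp only [Uhat, qq_add_one, add_im, one_im, add_zero]

/-- The coefficient of `v⁻ʲ` in `Û_{2n}`, where `v` is the imaginary part of `τ`. -/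
def UhatCoeff (n j : ℕ) (τ : ℂ) : ℂ :=
  2 * I * ((-1) ^ (n + j) * π ^ (2 * n - j + 1) /
    (2 ^ j * j.factorial * (2 * n - 2 * j + 1).factorial)) * Uram (n - j) (qq τ)

lemma Uhat_eq_sum_UhatCoeff (n : ℕ) (τ : ℂ) :
    Uhat n τ = ∑ j ∈ Finset.range (n + 1), UhatCoeff n j τ / (τ.im : ℂ) ^ j := by
  rw [Uhat, Finset.mul_sum]
  refine Finset.sum_congr rfl fun j _ ↦ ?_
  rw [UhatCoeff, mul_pow]
  ring

lemma differentiableOn_UhatCoeff (n j : ℕ) :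
    DifferentiableOn ℂ (UhatCoeff n j) {τ | 0 < τ.im} :=
  (differentiableOn_Uram_qq (n - j)).const_mul _

lemma UhatCoeff_self_ne_zero (n : ℕ) {τ : ℂ} (hτ : 0 < τ.im) : UhatCoeff n n τ ≠ 0 := by
  rw [UhatCoeff, Nat.sub_self n, Uram_zero_qq hτ]
  simp [Nat.factorial_ne_zero, Real.pi_ne_zero]

/-- For every `n ≥ 0`, the completion `Û_{2n}` transforms like a modular
form of weight `2n` on SL₂(ℤ), and is a polynomial in `1/v` of degree exactly `n` with
holomorphic coefficients; hence it is an almost holomorphic modular form of weight `2n` and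
depth `n`. -/
theorem Uhat_almost_holomorphic_modular (n : ℕ) :
    (∀ a b c d : ℤ, a * d - b * c = 1 → ∀ τ : ℂ, 0 < τ.im →
      Uhat n ((a * τ + b) / (c * τ + d)) = (c * τ + d) ^ (2 * n) * Uhat n τ) ∧
    (∃ f : ℕ → ℂ → ℂ,
      (∀ j, j ≤ n → DifferentiableOn ℂ (f j) {τ : ℂ | 0 < τ.im}) ∧
      (∃ τ : ℂ, 0 < τ.im ∧ f n τ ≠ 0) ∧
      (∀ τ : ℂ, 0 < τ.im →
        Uhat n τ = ∑ j ∈ Finset.range (n + 1), f j τ / (τ.im : ℂ) ^ j)) := by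
  have hI : 0 < I.im := by simp only [Complex.I_im, zero_lt_one]
  refine ⟨fun a b c d hdet τ hτ ↦ ?_, UhatCoeff n, fun j _ ↦ differentiableOn_UhatCoeff n j,
    ⟨I, hI, UhatCoeff_self_ne_zero n hI⟩, fun τ _ ↦ Uhat_eq_sum_UhatCoeff n τ⟩
  exact_mod_cast apply_moebius_of_S_T (f := Uhat n) (k := (2 * n : ℕ))
    (fun τ hτ ↦ by exact_mod_cast Uhat_neg_one_div n hτ) (fun τ _ ↦ Uhat_add_one n τ) hdet hτ
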